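/- Let v : ℝ → ℝ be a bounded stable solution of v'' = F'(v) with |v| ≤ 1, where F is a balanced double-well potential (stability: ∫ (φ')² + F''(v)φ² ≥ 0 for all compactly supported smooth φ). Suppose additionally v is nonconstant. Then v(y) = g(±(y − K)) for some K ∈ ℝ, where g is the heteroclinic connecting −1 to 1; in particular v is strictly monotone. -/

import Mathlib

open Real MeasureTheory

/-!
Suppose `v' y = 0`. The function `v'` solves the linearized equation `w'' = F''(v) w`. A second
zero of `v'` is impossible: cutting `v'` off outside the interval between the two zeros gives a
Lipschitz null vector of the nonnegative second variation with a genuine corner. So `v'` has a sign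
beyond `y`, `v` converges there to a critical point of `F`, and conservation of `v'² / 2 - F(v)`
makes this limit a well and forces `v' y ^ 2 = 2 F(v y) > 0`, a contradiction. Hence `v` is strictly
monotone and connects the wells; at a zero of `v`, `v'² = 2 F(0)` is also the squared speed of `g`
at its zero, and uniqueness for the Cauchy problem identifies `v` with a translate of `g` or of its
reflection.
-/

section StableTestFunctions

open Filter Set Topology Metric
open scoped Convolution NNReal Pointwise

/-- The quadratic form `∫ φ'² + q φ²`: for `q = F'' ∘ v` it is the second variation at `v` of the
energy `∫ v'² / 2 + F(v)`. -/
noncomputable def secondVariation (q φ : ℝ → ℝ) : ℝ :=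
  ∫ y, ((deriv φ y) ^ 2 + q y * (φ y) ^ 2)

/-- The second variation with potential `q` is nonnegative on smooth compactly supported
functions. -/
def IsStablePotential (q : ℝ → ℝ) : Prop :=
  ∀ φ : ℝ → ℝ, ContDiff ℝ (⊤ : ℕ∞) φ → HasCompactSupport φ → 0 ≤ secondVariation q φ

/-- A smooth bump supported in `[-1 / (n + 1), 1 / (n + 1)]`. -/
noncomputable def mollifier (n : ℕ) : ContDiffBump (0 : ℝ) where
  rIn := 1 / (n + 1) / 2
  rOut := 1 / (n + 1)
  rIn_pos := by positivity
  rIn_lt_rOut := half_lt_self (by positivity)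

/-- The convolution of `φ` with the normalized `mollifier n`. -/
noncomputable def mollify (n : ℕ) (φ : ℝ → ℝ) : ℝ → ℝ :=
  (mollifier n).normed volume ⋆[ContinuousLinearMap.lsmul ℝ ℝ, volume] φ

lemma mollifier_rOut_le_one (n : ℕ) : (mollifier n).rOut ≤ 1 :=
  (div_le_one (by positivity)).2 (le_add_of_nonneg_left n.cast_nonneg)

lemma tendsto_mollifier_rOut : Tendsto (fun n => (mollifier n).rOut) atTop (𝓝 0) :=
  tendsto_one_div_add_atTop_nhds_zero_nat

lemma contDiff_mollify {φ : ℝ → ℝ} (hφ : LocallyIntegrable φ) (n : ℕ) :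
    ContDiff ℝ (⊤ : ℕ∞) (mollify n φ) :=
  (mollifier n).hasCompactSupport_normed.contDiff_convolution_left _
    (mollifier n).contDiff_normed hφ

lemma tsupport_mollify_subset {φ : ℝ → ℝ} (hφ : HasCompactSupport φ) (n : ℕ) :
    tsupport (mollify n φ) ⊆ closedBall 0 1 + tsupport φ := by
  refine closure_minimal ?_ ((isCompact_closedBall 0 1).add hφ.isCompact).isClosed
  refine (support_convolution_subset _).trans (add_subset_add ?_ (subset_tsupport φ))
  rw [(mollifier n).support_normed_eq]
  exact ball_subset_closedBall.trans (closedBall_subset_closedBall (mollifier_rOut_le_one n))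

variable {φ : ℝ → ℝ} {C : ℝ≥0}

lemma locallyIntegrable_deriv_of_lipschitzWith (hφ : LipschitzWith C φ) :
    LocallyIntegrable (deriv φ) :=
  (locallyIntegrable_const (C : ℝ)).mono (measurable_deriv φ).aestronglyMeasurable
    (.of_forall fun x => by
      simpa only [Real.norm_eq_abs, NNReal.abs_eq] using
        norm_deriv_le_of_lipschitz (x₀ := x) hφ)

lemma hasDerivAt_convolution_of_lipschitzWith {ρ : ℝ → ℝ} (hρ : Continuous ρ)
    (hρs : HasCompactSupport ρ) (hφ : LipschitzWith C φ) (x : ℝ) :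
    HasDerivAt (ρ ⋆[ContinuousLinearMap.lsmul ℝ ℝ, volume] φ)
      ((ρ ⋆[ContinuousLinearMap.lsmul ℝ ℝ, volume] deriv φ) x) x := by
  have ae_differentiableAt : ∀ᵐ t : ℝ, DifferentiableAt ℝ φ (x - t) :=
    (quasiMeasurePreserving_sub_left volume x).ae hφ.ae_differentiableAt_real
  have exists_deriv := hρs.convolutionExists_left (ContinuousLinearMap.lsmul ℝ ℝ) hρ
    (locallyIntegrable_deriv_of_lipschitzWith hφ) x
  have exists_self := hρs.convolutionExists_left (ContinuousLinearMap.lsmul ℝ ℝ) hρ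
    (hφ.continuous.locallyIntegrable (μ := volume))
  refine (hasDerivAt_integral_of_dominated_loc_of_lip (bound := fun t => ρ t * C) univ_mem
    (.of_forall fun y => (exists_self y).aestronglyMeasurable) (exists_self x)
    exists_deriv.aestronglyMeasurable (.of_forall fun t => ?_)
    ((hρ.integrable_of_hasCompactSupport hρs).mul_const _) ?_).2
  · refine LipschitzOnWith.of_dist_le_mul fun y _ z _ => ?_
    have lipschitz_at : |φ (y - t) - φ (z - t)| ≤ C * |y - z| := by
      simpa [Real.dist_eq] using hφ.dist_le_mul (y - t) (z - t)
    simpa [Real.dist_eq, ← mul_sub, abs_mul, mul_assoc] using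
      mul_le_mul_of_nonneg_left lipschitz_at (abs_nonneg (ρ t))
  · filter_upwards [ae_differentiableAt] with t ht
    exact (ht.hasDerivAt.comp_sub_const x t).const_mul (ρ t)

lemma deriv_mollify (hφ : LipschitzWith C φ) (n : ℕ) :
    deriv (mollify n φ) = mollify n (deriv φ) :=
  funext fun x => (hasDerivAt_convolution_of_lipschitzWith (mollifier n).continuous_normed
    (mollifier n).hasCompactSupport_normed hφ x).deriv

lemma abs_mollify_le (hφ : LipschitzWith C φ) (n : ℕ) (x : ℝ) :
    |mollify n φ x| ≤ |φ x| + C := by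
  have dist_le : dist (mollify n φ x) (φ x) ≤ C :=
    (mollifier n).dist_normed_convolution_le hφ.continuous.aestronglyMeasurable fun y hy =>
      (hφ.dist_le_mul y x).trans (mul_le_of_le_one_right C.coe_nonneg
        ((mem_ball.1 hy).le.trans (mollifier_rOut_le_one n)))
  linarith [abs_sub_abs_le_abs_sub (mollify n φ x) (φ x), Real.dist_eq (mollify n φ x) (φ x)]

lemma abs_deriv_mollify_le (hφ : LipschitzWith C φ) (n : ℕ) (x : ℝ) :
    |deriv (mollify n φ) x| ≤ 3 * C := by
  have abs_deriv_le (y : ℝ) : |deriv φ y| ≤ C := norm_deriv_le_of_lipschitz hφ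
  have dist_le : dist (mollify n (deriv φ) x) (deriv φ x) ≤ 2 * C :=
    (mollifier n).dist_normed_convolution_le (measurable_deriv φ).aestronglyMeasurable
      fun y _ => (dist_le_norm_add_norm _ _).trans
        ((add_le_add (abs_deriv_le y) (abs_deriv_le x)).trans_eq (two_mul _).symm)
  rw [deriv_mollify hφ]
  linarith [abs_sub_abs_le_abs_sub (mollify n (deriv φ) x) (deriv φ x), abs_deriv_le x,
    Real.dist_eq (mollify n (deriv φ) x) (deriv φ x)]

lemma tendsto_mollify (hφ : Continuous φ) (x : ℝ) :
    Tendsto (fun n => mollify n φ x) atTop (𝓝 (φ x)) :=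
  ContDiffBump.convolution_tendsto_right_of_continuous tendsto_mollifier_rOut hφ x

lemma ae_tendsto_deriv_mollify (hφ : LipschitzWith C φ) :
    ∀ᵐ x, Tendsto (fun n => deriv (mollify n φ) x) atTop (𝓝 (deriv φ x)) := by
  simp only [deriv_mollify hφ]
  exact ContDiffBump.ae_convolution_tendsto_right_of_locallyIntegrable (K := 2)
    tendsto_mollifier_rOut (.of_forall fun n => (mul_div_cancel₀ _ two_ne_zero).ge)
    (locallyIntegrable_deriv_of_lipschitzWith hφ)

lemma tendsto_secondVariation_mollify {q : ℝ → ℝ} (hq : Continuous q) (hφ : LipschitzWith C φ)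
    (hφs : HasCompactSupport φ) :
    Tendsto (fun n => secondVariation q (mollify n φ)) atTop (𝓝 (secondVariation q φ)) := by
  set S : Set ℝ := closedBall 0 1 + tsupport φ
  have isCompact_S : IsCompact S := (isCompact_closedBall 0 1).add hφs.isCompact
  have contDiff (n : ℕ) := contDiff_mollify hφ.continuous.locallyIntegrable n
  refine tendsto_integral_of_dominated_convergence
    (S.indicator fun y => (3 * C) ^ 2 + |q y| * (|φ y| + C) ^ 2) (fun n => ?_) ?_ (fun n => ?_) ?_
  · exact ((((contDiff n).continuous_deriv (by norm_cast)).pow 2).add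
      (hq.mul ((contDiff n).continuous.pow 2))).aestronglyMeasurable
  · rw [integrable_indicator_iff isCompact_S.measurableSet]
    have := hφ.continuous
    exact (by fun_prop : Continuous _).continuousOn.integrableOn_compact isCompact_S
  · refine .of_forall fun y => ?_
    by_cases hy : y ∈ S
    · rw [indicator_of_mem hy, Real.norm_eq_abs]
      refine (abs_add_le _ _).trans ?_
      rw [abs_mul, abs_pow, abs_pow]
      gcongr
      exacts [abs_deriv_mollify_le hφ n y, abs_mollify_le hφ n y]
    · have notMem : y ∉ tsupport (mollify n φ) := fun h => hy (tsupport_mollify_subset hφs n h)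
      have deriv_zero : deriv (mollify n φ) y = 0 :=
        Function.notMem_support.1 fun h => notMem (support_deriv_subset h)
      simp [indicator_of_notMem hy, deriv_zero, image_eq_zero_of_notMem_tsupport notMem]
  · filter_upwards [ae_tendsto_deriv_mollify hφ] with y hy
    exact (hy.pow 2).add (((tendsto_mollify hφ.continuous y).pow 2).const_mul (q y))

lemma IsStablePotential.secondVariation_nonneg_of_lipschitzWith {q : ℝ → ℝ}
    (hq : Continuous q) (hst : IsStablePotential q) (hφ : LipschitzWith C φ)
    (hφs : HasCompactSupport φ) : 0 ≤ secondVariation q φ :=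
  ge_of_tendsto' (tendsto_secondVariation_mollify hq hφ hφs) fun n =>
    hst _ (contDiff_mollify hφ.continuous.locallyIntegrable n)
      ((mollifier n).hasCompactSupport_normed.convolution _ hφs)

end StableTestFunctions

section ConjugatePoints

open Filter Set Topology
open scoped NNReal

lemma hasDerivAt_indicator_of_notMem_frontier {s : Set ℝ} {u u' : ℝ → ℝ} {x : ℝ}
    (hx : x ∉ frontier s) (hu : HasDerivAt u (u' x) x) :
    HasDerivAt (s.indicator u) (s.indicator u' x) x := by
  by_cases hxs : x ∈ s
  · have mem_nhds : s ∈ 𝓝 x := mem_interior_iff_mem_nhds.1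
      (by_contra fun h => hx ⟨subset_closure hxs, h⟩)
    rw [indicator_of_mem hxs]
    exact hu.congr_of_eventuallyEq (eventuallyEq_of_mem mem_nhds eqOn_indicator)
  · have mem_nhds : sᶜ ∈ 𝓝 x := mem_interior_iff_mem_nhds.1 <| by
      rw [interior_compl]
      exact fun h => hx ⟨h, fun h' => hxs (interior_subset h')⟩
    rw [indicator_of_notMem hxs]
    exact (hasDerivAt_const x 0).congr_of_eventuallyEq
      (eventuallyEq_of_mem mem_nhds eqOn_indicator')

lemma lipschitzWith_indicator_Icc {u : ℝ → ℝ} {a b : ℝ} {C : ℝ≥0} (hab : a ≤ b)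
    (hu : LipschitzOnWith C u (Icc a b)) (ha : u a = 0) (hb : u b = 0) :
    LipschitzWith C ((Icc a b).indicator u) := by
  have indicator_eq : (Icc a b).indicator u = IccExtend hab ((Icc a b).domRestrict u) := by
    ext x
    rcases lt_or_ge x a with hxa | hxa
    · rw [IccExtend_of_le_left _ _ hxa.le, indicator_of_notMem (notMem_Icc_of_lt hxa),
        domRestrict_apply, ha]
    rcases lt_or_ge b x with hxb | hxb
    · rw [IccExtend_of_right_le _ _ hxb.le, indicator_of_notMem (notMem_Icc_of_gt hxb),
        domRestrict_apply, hb]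
    · rw [IccExtend_of_mem _ _ ⟨hxa, hxb⟩, indicator_of_mem (mem_Icc.2 ⟨hxa, hxb⟩),
        domRestrict_apply]
  rw [indicator_eq, ← mul_one C]
  exact hu.to_restrict.comp (LipschitzWith.projIcc hab)

variable {q u u' : ℝ → ℝ} {a b : ℝ}

lemma integral_deriv_mul_deriv_add_of_hasDerivAt (hq : Continuous q)
    (hu : ∀ x, HasDerivAt u (u' x) x) (hu' : ∀ x, HasDerivAt u' (q x * u x) x)
    {η η' : ℝ → ℝ} (hη : ∀ x, HasDerivAt η (η' x) x) (hη' : Continuous η') :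
    ∫ x in a..b, (u' x * η' x + q x * u x * η x) = u' b * η b - u' a * η a := by
  have continuous_u : Continuous u := continuous_iff_continuousAt.2 fun x => (hu x).continuousAt
  have continuous_u' : Continuous u' :=
    continuous_iff_continuousAt.2 fun x => (hu' x).continuousAt
  have continuous_η : Continuous η := continuous_iff_continuousAt.2 fun x => (hη x).continuousAt
  exact intervalIntegral.integral_eq_sub_of_hasDerivAt
    (fun x _ => ((hu' x).fun_mul (hη x)).congr_deriv (add_comm _ _))
    ((by fun_prop : Continuous _).intervalIntegrable a b)

lemma secondVariation_indicator_add (hq : Continuous q) (hu : ∀ x, HasDerivAt u (u' x) x)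
    (hu' : ∀ x, HasDerivAt u' (q x * u x) x) (hab : a < b) (ha : u a = 0) (hb : u b = 0)
    {χ : ℝ → ℝ} (hχ : ContDiff ℝ 1 χ) (hχs : HasCompactSupport χ) (t : ℝ) :
    secondVariation q (fun x => (Icc a b).indicator u x + t * χ x) =
      t ^ 2 * secondVariation q χ + 2 * t * (u' b * χ b - u' a * χ a) := by
  have continuous_u : Continuous u := continuous_iff_continuousAt.2 fun x => (hu x).continuousAt
  have continuous_u' : Continuous u' :=
    continuous_iff_continuousAt.2 fun x => (hu' x).continuousAt
  have continuous_χ := hχ.continuous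
  have hasDerivAt_χ (x : ℝ) := ((hχ.differentiable one_ne_zero) x).hasDerivAt
  set w : ℝ → ℝ := fun x =>
    u' x * (u' x + 2 * t * deriv χ x) + q x * u x * (u x + 2 * t * χ x) with w_def
  have integral_w : ∫ x in Icc a b, w x = 2 * t * (u' b * χ b - u' a * χ a) := by
    rw [integral_Icc_eq_integral_Ioc, ← intervalIntegral.integral_of_le hab.le,
      integral_deriv_mul_deriv_add_of_hasDerivAt hq hu hu'
        (fun x => (hu x).fun_add ((hasDerivAt_χ x).const_mul (2 * t))) (by fun_prop), ha, hb]
    ring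
  have ae_notMem_frontier : ∀ᵐ x, x ∉ frontier (Icc a b) := by
    rw [frontier_Icc hab.le]
    exact ((finite_singleton b).insert a).countable.ae_notMem volume
  have integrand_eq : (fun x => (deriv (fun x => (Icc a b).indicator u x + t * χ x) x) ^ 2 +
      q x * ((Icc a b).indicator u x + t * χ x) ^ 2) =ᵐ[volume]
      fun x => t ^ 2 * ((deriv χ x) ^ 2 + q x * (χ x) ^ 2) + (Icc a b).indicator w x := by
    filter_upwards [ae_notMem_frontier] with x hx
    rw [((hasDerivAt_indicator_of_notMem_frontier hx (hu x)).fun_add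
      ((hasDerivAt_χ x).const_mul t)).deriv]
    by_cases hxI : x ∈ Icc a b
    · simp only [indicator_of_mem hxI, w_def]
      ring
    · simp only [indicator_of_notMem hxI]
      ring
  have integrable_χ : Integrable fun x => (deriv χ x) ^ 2 + q x * (χ x) ^ 2 :=
    (by fun_prop : Continuous _).integrable_of_hasCompactSupport
      ((hχs.deriv.comp_left (g := (· ^ 2)) (by simp)).add
        (hχs.comp_left (g := (· ^ 2)) (by simp)).mul_left)
  have integrable_w : Integrable ((Icc a b).indicator w) :=
    ((by fun_prop : Continuous w).continuousOn.integrableOn_compact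
      isCompact_Icc).integrable_indicator measurableSet_Icc
  rw [secondVariation, integral_congr_ae integrand_eq,
    integral_add (integrable_χ.const_mul _) integrable_w, integral_const_mul,
    integral_indicator measurableSet_Icc, integral_w, secondVariation]

-- The truncation of `u` to `[a, b]` is a null vector of the nonnegative form, so its first
-- variation vanishes; testing against a bump that is `1` at `a` and `0` at `b` isolates `u' a`.
lemma IsStablePotential.deriv_eq_zero_of_conjugate (hst : IsStablePotential q)
    (hq : Continuous q) (hu : ∀ x, HasDerivAt u (u' x) x)
    (hu' : ∀ x, HasDerivAt u' (q x * u x) x) (hab : a < b) (ha : u a = 0) (hb : u b = 0) :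
    u' a = 0 := by
  let χ : ContDiffBump a := ⟨(b - a) / 2, b - a, by linarith, by linarith⟩
  have χ_left : χ a = 1 := χ.one_of_mem_closedBall (Metric.mem_closedBall_self χ.rIn_pos.le)
  have χ_right : χ b = 0 := χ.zero_of_le_dist (Real.dist_eq b a ▸ le_abs_self (b - a))
  have contDiff_u : ContDiff ℝ 1 u := by
    refine contDiff_one_iff_deriv.2 ⟨fun x => (hu x).differentiableAt, ?_⟩
    rw [funext fun x => (hu x).deriv]
    exact continuous_iff_continuousAt.2 fun x => (hu' x).continuousAt
  obtain ⟨C, hC⟩ := contDiff_u.contDiffOn.exists_lipschitzOnWith one_ne_zero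
    (convex_Icc a b) isCompact_Icc
  obtain ⟨D, hD⟩ := ContDiff.lipschitzWith_of_hasCompactSupport χ.hasCompactSupport
    (χ.contDiff (n := 1)) one_ne_zero
  have quadratic_nonneg (t : ℝ) :
      0 ≤ secondVariation q χ * (t * t) + (-2 * u' a) * t + 0 := by
    have nonneg := hst.secondVariation_nonneg_of_lipschitzWith hq
      ((lipschitzWith_indicator_Icc hab.le hC ha hb).add ((lipschitzWith_smul t).comp hD))
      ((HasCompactSupport.intro isCompact_Icc fun x hx => indicator_of_notMem hx u).add
        χ.hasCompactSupport.mul_left)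
    have expansion := secondVariation_indicator_add hq hu hu' hab ha hb χ.contDiff
      χ.hasCompactSupport t
    rw [χ_left, χ_right] at expansion
    calc 0 ≤ _ := nonneg
      _ = _ := expansion
      _ = _ := by ring
  have := discrim_le_zero quadratic_nonneg
  rw [discrim] at this
  nlinarith [sq_nonneg (u' a)]

end ConjugatePoints

section SecondOrderGronwall

open Set

variable {w w' w'' p : ℝ → ℝ} {a : ℝ}

lemma eqOn_zero_Ici_of_abs_deriv_deriv_le (hw : ∀ y, HasDerivAt w (w' y) y)
    (hw' : ∀ y, HasDerivAt w' (w'' y) y) (hp : Continuous p)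
    (hle : ∀ y, |w'' y| ≤ p y * |w y|) (h₀ : w a = 0) (h₁ : w' a = 0) :
    EqOn w 0 (Ici a) := by
  intro b hb
  obtain ⟨C, hC⟩ := isCompact_Icc.exists_bound_of_continuousOn (hp.continuousOn (s := Icc a b))
  have hasDerivAt_pair (y : ℝ) : HasDerivAt (fun y => (w y, w' y)) (w' y, w'' y) y :=
    (hw y).prodMk (hw' y)
  have norm_deriv_le (y : ℝ) (hy : y ∈ Ico a b) :
      ‖(w' y, w'' y)‖ ≤ max 1 C * ‖(w y, w' y)‖ + 0 := by
    rw [add_zero]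
    refine norm_prod_le_iff.2 ⟨?_, ?_⟩
    · calc ‖w' y‖ ≤ 1 * ‖(w y, w' y)‖ := (norm_snd_le (w y, w' y)).trans_eq (one_mul _).symm
        _ ≤ max 1 C * ‖(w y, w' y)‖ := by gcongr; exact le_max_left 1 C
    · calc ‖w'' y‖ ≤ p y * |w y| := hle y
        _ ≤ max 1 C * ‖(w y, w' y)‖ := by
          gcongr
          · exact (le_abs_self _).trans ((hC y (Ico_subset_Icc_self hy)).trans (le_max_right 1 C))
          · exact norm_fst_le (w y, w' y)
  have norm_pair_le := norm_le_gronwallBound_of_norm_deriv_right_le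
    (fun y _ => (hasDerivAt_pair y).continuousAt.continuousWithinAt)
    (fun y _ => (hasDerivAt_pair y).hasDerivWithinAt) (by simp [h₀, h₁] : _ ≤ (0 : ℝ))
    norm_deriv_le b ⟨hb, le_rfl⟩
  rw [gronwallBound_ε0_δ0] at norm_pair_le
  exact norm_le_zero_iff.1 ((norm_fst_le (w b, w' b)).trans norm_pair_le)

lemma eq_zero_of_abs_deriv_deriv_le (hw : ∀ y, HasDerivAt w (w' y) y)
    (hw' : ∀ y, HasDerivAt w' (w'' y) y) (hp : Continuous p)
    (hle : ∀ y, |w'' y| ≤ p y * |w y|) (h₀ : w a = 0) (h₁ : w' a = 0) : w = 0 := by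
  ext y
  rcases le_total a y with hy | hy
  · exact eqOn_zero_Ici_of_abs_deriv_deriv_le hw hw' hp hle h₀ h₁ hy
  · have reflected := eqOn_zero_Ici_of_abs_deriv_deriv_le (a := 0)
      (w := fun x => w (a - x)) (w' := fun x => -w' (a - x)) (w'' := fun x => w'' (a - x))
      (fun x => (hw (a - x)).comp_const_sub a x)
      (fun x => ((hw' (a - x)).comp_const_sub a x).fun_neg.congr_deriv (neg_neg _))
      (hp.comp (continuous_const.sub continuous_id)) (fun x => hle (a - x))
      (by simpa using h₀) (by simpa using h₁)
    simpa using reflected (sub_nonneg.2 hy)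

end SecondOrderGronwall

section LimitsAtInfinity

open Filter Set Topology

variable {h h' h'' : ℝ → ℝ} {c d : ℝ}

lemma exists_mem_Ioo_deriv_eq_sub (hh : ∀ s, HasDerivAt h (h' s) s) (s : ℝ) :
    ∃ ξ ∈ Ioo s (s + 1), h' ξ = h (s + 1) - h s := by
  obtain ⟨ξ, hξ, slope_eq⟩ := exists_hasDerivAt_eq_slope h h' (lt_add_one s)
    (fun x _ => (hh x).continuousAt.continuousWithinAt) (fun x _ => hh x)
  exact ⟨ξ, hξ, by rw [slope_eq, add_sub_cancel_left, div_one]⟩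

lemma tendsto_sub_of_tendsto_deriv (hh : ∀ s, HasDerivAt h (h' s) s)
    (hlim : Tendsto h' atTop (𝓝 d)) : Tendsto (fun s => h (s + 1) - h s) atTop (𝓝 d) := by
  choose ξ hξ deriv_eq using exists_mem_Ioo_deriv_eq_sub hh
  simp only [← deriv_eq]
  exact hlim.comp (tendsto_atTop_mono (fun s => (hξ s).1.le) tendsto_id)

lemma eq_zero_of_tendsto_of_tendsto_deriv_deriv (hh : ∀ s, HasDerivAt h (h' s) s)
    (hh' : ∀ s, HasDerivAt h' (h'' s) s) (hc : Tendsto h atTop (𝓝 c))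
    (hd : Tendsto h'' atTop (𝓝 d)) : d = 0 := by
  have tendsto_shift : Tendsto (fun s : ℝ => s + 1) atTop atTop :=
    tendsto_atTop_add_const_right _ 1 tendsto_id
  have hasDerivAt_sub (s : ℝ) : HasDerivAt (fun s => h (s + 1) - h s) (h' (s + 1) - h' s) s :=
    ((hh (s + 1)).comp_add_const s 1).fun_sub (hh s)
  have sub_tendsto_zero : Tendsto (fun s => h (s + 1) - h s) atTop (𝓝 0) := by
    simpa using (hc.comp tendsto_shift).sub hc
  have second_sub_tendsto_zero :
      Tendsto (fun s => h (s + 1 + 1) - h (s + 1) - (h (s + 1) - h s)) atTop (𝓝 0) := by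
    simpa using (sub_tendsto_zero.comp tendsto_shift).sub sub_tendsto_zero
  exact tendsto_nhds_unique
    (tendsto_sub_of_tendsto_deriv hasDerivAt_sub (tendsto_sub_of_tendsto_deriv hh' hd))
    second_sub_tendsto_zero

lemma tendsto_deriv_zero_of_tendsto (hh : ∀ s, HasDerivAt h (h' s) s)
    (hh' : ∀ s, HasDerivAt h' (h'' s) s) (hc : Tendsto h atTop (𝓝 c))
    (hd : Tendsto h'' atTop (𝓝 0)) : Tendsto h' atTop (𝓝 0) := by
  choose ξ hξ deriv_eq using exists_mem_Ioo_deriv_eq_sub hh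
  have exists_slope (s : ℝ) : ∃ ζ ∈ Ioo s (ξ s), h'' ζ = (h' (ξ s) - h' s) / (ξ s - s) :=
    exists_hasDerivAt_eq_slope h' h'' (hξ s).1
      (fun x _ => (hh' x).continuousAt.continuousWithinAt) (fun x _ => hh' x)
  choose ζ hζ slope_eq using exists_slope
  have deriv_eq_sub (s : ℝ) : h' s = (h (s + 1) - h s) - h'' (ζ s) * (ξ s - s) := by
    rw [slope_eq, div_mul_cancel₀ _ (sub_pos.2 (hξ s).1).ne', deriv_eq]
    ring
  have sub_tendsto_zero : Tendsto (fun s => h (s + 1) - h s) atTop (𝓝 0) := by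
    simpa using (hc.comp (tendsto_atTop_add_const_right _ 1 tendsto_id)).sub hc
  have remainder_tendsto_zero : Tendsto (fun s => h'' (ζ s) * (ξ s - s)) atTop (𝓝 0) := by
    have tendsto_ζ : Tendsto ζ atTop atTop := tendsto_atTop_mono (fun s => (hζ s).1.le) tendsto_id
    refine (hd.comp tendsto_ζ).zero_mul_isBoundedUnder_le (isBoundedUnder_of ⟨1, fun s => ?_⟩)
    rw [Function.comp_apply, Real.norm_eq_abs, abs_le]
    constructor <;> linarith [(hξ s).1, (hξ s).2]
  simpa [← deriv_eq_sub] using sub_tendsto_zero.sub remainder_tendsto_zero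

lemma exists_tendsto_of_monotoneOn_Ici {a M : ℝ} (hmono : MonotoneOn h (Ici a))
    (hM : ∀ s, |h s| ≤ M) : ∃ c, Tendsto h atTop (𝓝 c) := by
  have mono : Monotone fun s => h (max a s) := fun s t hst =>
    hmono (le_max_left a s) (le_max_left a t) (max_le_max le_rfl hst)
  have bdd : BddAbove (range fun s => h (max a s)) :=
    ⟨M, forall_mem_range.2 fun s => (abs_le.1 (hM _)).2⟩
  refine ⟨_, (tendsto_atTop_ciSup mono bdd).congr' ?_⟩
  filter_upwards [eventually_ge_atTop a] with s hs
  rw [max_eq_right hs]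

lemma exists_tendsto_of_deriv_ne_zero {a M : ℝ} (hh : ∀ s, HasDerivAt h (h' s) s)
    (hM : ∀ s, |h s| ≤ M) (hne : ∀ s ∈ Ioi a, h' s ≠ 0) : ∃ c, Tendsto h atTop (𝓝 c) := by
  have continuous_h : Continuous h := continuous_iff_continuousAt.2 fun s => (hh s).continuousAt
  rcases hasDerivWithinAt_forall_lt_or_forall_gt_of_forall_ne (convex_Ioi a)
    (fun s _ => (hh s).hasDerivWithinAt) hne with neg | pos
  · obtain ⟨c, hc⟩ := exists_tendsto_of_monotoneOn_Ici (h := -h) (a := a) (M := M)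
      (antitoneOn_of_hasDerivWithinAt_nonpos (convex_Ici a) continuous_h.continuousOn
        (fun s _ => (hh s).hasDerivWithinAt)
        (fun s hs => (neg s (interior_Ici (a := a) ▸ hs)).le)).neg
      (fun s => by simpa using hM s)
    exact ⟨-c, by simpa using hc.neg⟩
  · exact exists_tendsto_of_monotoneOn_Ici
      (monotoneOn_of_hasDerivWithinAt_nonneg (convex_Ici a) continuous_h.continuousOn
        (fun s _ => (hh s).hasDerivWithinAt)
        (fun s hs => (pos s (interior_Ici (a := a) ▸ hs)).le)) hM

end LimitsAtInfinity

section Trajectories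

open Filter Set Topology

lemma continuousOn_image_of_continuousOn_comp {X Y Z : Type*} [TopologicalSpace X] [T2Space X]
    [TopologicalSpace Y] [T2Space Y] [TopologicalSpace Z] {f : Y → Z} {u : X → Y} {K : Set X}
    (hK : IsCompact K) (hu : ContinuousOn u K) (hfu : ContinuousOn (f ∘ u) K) :
    ContinuousOn f (u '' K) := by
  refine continuousOn_iff_isClosed.2 fun t ht => ⟨u '' (K ∩ f ∘ u ⁻¹' t), ?_, ?_⟩
  · have isClosed_inter := hfu.preimage_isClosed_of_isClosed hK.isClosed ht
    exact ((hK.of_isClosed_subset isClosed_inter inter_subset_left).image_of_continuousOn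
      (hu.mono inter_subset_left)).isClosed
  · ext y
    constructor
    · rintro ⟨hy, x, hx, rfl⟩
      exact ⟨⟨x, ⟨hx, hy⟩, rfl⟩, x, hx, rfl⟩
    · rintro ⟨⟨x, ⟨-, hy⟩, rfl⟩, hx'⟩
      exact ⟨hy, hx'⟩

lemma tendsto_integral_of_continuousAt {f : ℝ → ℝ} {c : ℝ} (hf : ContinuousAt f c) :
    Tendsto (fun x => ∫ t in c..x, f t) (𝓝 c) (𝓝 0) := by
  obtain ⟨δ, hδ, bound⟩ := Metric.eventually_nhds_iff_ball.1
    (hf.norm.eventually_le_const (lt_add_one ‖f c‖))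
  refine squeeze_zero_norm' (a := fun x => (‖f c‖ + 1) * |x - c|) ?_ ?_
  · filter_upwards [Metric.ball_mem_nhds c hδ] with x hx
    exact intervalIntegral.norm_integral_le_of_norm_le_const fun t ht => bound t
      ((convex_ball c δ).ordConnected.uIcc_subset (Metric.mem_ball_self hδ) hx
        (uIoc_subset_uIcc ht))
  · exact Continuous.tendsto' (by fun_prop) c 0 (by simp)

/-- A solution `u` of Newton's equation `u'' = f(u)` on the line, with velocity `u'`. The force is
only required to be continuous along the trajectory. -/
structure IsTrajectory (f u u' : ℝ → ℝ) : Prop where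
  hasDerivAt : ∀ y, HasDerivAt u (u' y) y
  hasDerivAt_velocity : ∀ y, HasDerivAt u' (f (u y)) y
  continuous_force : Continuous fun y => f (u y)

namespace IsTrajectory

variable {f u u' w w' : ℝ → ℝ} {c y₀ : ℝ}

lemma of_contDiff (hu : ContDiff ℝ 2 u) (hode : ∀ y, deriv (deriv u) y = f (u y)) :
    IsTrajectory f u (deriv u) where
  hasDerivAt y := (hu.differentiable two_ne_zero y).hasDerivAt
  hasDerivAt_velocity y := hode y ▸ (hu.differentiable_deriv_two y).hasDerivAt
  continuous_force := by
    simpa only [← hode, iteratedDeriv_succ, iteratedDeriv_zero] using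
      hu.continuous_iteratedDeriv 2 le_rfl

lemma continuous (hu : IsTrajectory f u u') : Continuous u :=
  continuous_iff_continuousAt.2 fun y => (hu.hasDerivAt y).continuousAt

lemma continuous_velocity (hu : IsTrajectory f u u') : Continuous u' :=
  continuous_iff_continuousAt.2 fun y => (hu.hasDerivAt_velocity y).continuousAt

lemma comp_sub_const (hu : IsTrajectory f u u') (K : ℝ) :
    IsTrajectory f (fun y => u (y - K)) (fun y => u' (y - K)) where
  hasDerivAt y := (hu.hasDerivAt (y - K)).comp_sub_const y K
  hasDerivAt_velocity y := (hu.hasDerivAt_velocity (y - K)).comp_sub_const y K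
  continuous_force := hu.continuous_force.comp (continuous_id.sub continuous_const)

lemma comp_const_sub (hu : IsTrajectory f u u') (K : ℝ) :
    IsTrajectory f (fun y => u (K - y)) (fun y => -u' (K - y)) where
  hasDerivAt y := (hu.hasDerivAt (K - y)).comp_const_sub K y
  hasDerivAt_velocity y :=
    ((hu.hasDerivAt_velocity (K - y)).comp_const_sub K y).fun_neg.congr_deriv (neg_neg _)
  continuous_force := hu.continuous_force.comp (continuous_const.sub continuous_id)

lemma eq_of_lipschitzOnWith {s : Set ℝ} {C : NNReal} (hf : LipschitzOnWith C f s)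
    (hu : IsTrajectory f u u') (hw : IsTrajectory f w w') (hus : ∀ y, u y ∈ s)
    (hws : ∀ y, w y ∈ s) (h₀ : u y₀ = w y₀) (h₁ : u' y₀ = w' y₀) : u = w :=
  sub_eq_zero.1 <| eq_zero_of_abs_deriv_deriv_le (p := fun _ => C)
    (fun y => (hu.hasDerivAt y).sub (hw.hasDerivAt y))
    (fun y => (hu.hasDerivAt_velocity y).sub (hw.hasDerivAt_velocity y)) continuous_const
    (fun y => hf.dist_le_mul _ (hus y) _ (hws y)) (sub_eq_zero.2 h₀) (sub_eq_zero.2 h₁)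

lemma eq_translate_or_eq_reflection_of_sq_velocity_eq {s : Set ℝ} {C : NNReal}
    (hf : LipschitzOnWith C f s) (hu : IsTrajectory f u u') (hw : IsTrajectory f w w')
    (hus : ∀ y, u y ∈ s) (hws : ∀ y, w y ∈ s) (h₀ : u y₀ = w 0)
    (h₁ : u' y₀ ^ 2 = w' 0 ^ 2) :
    (∀ y, u y = w (y - y₀)) ∨ (∀ y, u y = w (y₀ - y)) := by
  rcases sq_eq_sq_iff_eq_or_eq_neg.1 h₁ with h₁ | h₁
  · exact .inl <| congrFun <| eq_of_lipschitzOnWith (y₀ := y₀) hf hu (hw.comp_sub_const y₀) hus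
      (fun y => hws _) (by rwa [sub_self]) (by rwa [sub_self])
  · exact .inr <| congrFun <| eq_of_lipschitzOnWith (y₀ := y₀) hf hu (hw.comp_const_sub y₀) hus
      (fun y => hws _) (by rwa [sub_self]) (by rwa [sub_self])

lemma velocity_neg_or_pos (hu : IsTrajectory f u u') (hne : ∀ y, u' y ≠ 0) :
    (∀ y, u' y < 0) ∨ (∀ y, 0 < u' y) := by
  simpa using hasDerivWithinAt_forall_lt_or_forall_gt_of_forall_ne convex_univ
    (fun y _ => (hu.hasDerivAt y).hasDerivWithinAt) fun y _ => hne y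

lemma strictMono_or_strictAnti (hu : IsTrajectory f u u') (hne : ∀ y, u' y ≠ 0) :
    StrictMono u ∨ StrictAnti u :=
  (hu.velocity_neg_or_pos hne).symm.imp (strictMono_of_hasDerivAt_pos hu.hasDerivAt)
    (strictAnti_of_hasDerivAt_neg hu.hasDerivAt)

lemma continuous_dslope_comp (hu : IsTrajectory f u u') (hf : DifferentiableAt ℝ f c) :
    Continuous fun y => dslope f c (u y) := by
  refine continuous_iff_continuousAt.2 fun y => ?_
  by_cases hy : u y = c
  · subst hy
    exact ContinuousAt.comp' (continuousAt_dslope_same.2 hf) hu.continuous.continuousAt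
  · have slope_continuousAt : ContinuousAt (fun x => (u x - c)⁻¹ * (f (u x) - f c)) y :=
      ((hu.continuous.continuousAt.sub continuousAt_const).inv₀ (sub_ne_zero.2 hy)).mul
        (hu.continuous_force.continuousAt.sub continuousAt_const)
    refine slope_continuousAt.congr ?_
    filter_upwards [hu.continuous.continuousAt.eventually_ne hy] with x hx
    rw [dslope_of_ne f hx, slope, smul_eq_mul, vsub_eq_sub]

lemma eq_const_of_rest (hu : IsTrajectory f u u') (hf : DifferentiableAt ℝ f c) (hfc : f c = 0)
    (h₀ : u y₀ = c) (h₁ : u' y₀ = 0) : u = fun _ => c := by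
  refine sub_eq_zero.1 (eq_zero_of_abs_deriv_deriv_le (a := y₀) (p := fun y => |dslope f c (u y)|)
    (fun y => (hu.hasDerivAt y).sub_const c) hu.hasDerivAt_velocity
    (hu.continuous_dslope_comp hf).abs (fun y => ?_) (sub_eq_zero.2 h₀) h₁)
  rw [← abs_mul, mul_comm, Pi.sub_apply, ← smul_eq_mul, sub_smul_dslope, hfc, sub_zero]

lemma sq_velocity_sub_sq_velocity (hu : IsTrajectory f u u') (s t : ℝ) :
    u' t ^ 2 - u' s ^ 2 = 2 * ∫ x in u s..u t, f x := by
  have hasDerivAt_sq (y : ℝ) : HasDerivAt (fun y => u' y ^ 2) (2 * (f (u y) * u' y)) y :=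
    ((hu.hasDerivAt_velocity y).fun_pow 2).congr_deriv (by ring)
  have continuous_power : Continuous fun y => 2 * (f (u y) * u' y) :=
    continuous_const.mul (hu.continuous_force.mul hu.continuous_velocity)
  have continuousOn_force : ContinuousOn f (u '' uIcc s t) :=
    continuousOn_image_of_continuousOn_comp isCompact_uIcc hu.continuous.continuousOn
      hu.continuous_force.continuousOn
  calc u' t ^ 2 - u' s ^ 2 = ∫ y in s..t, 2 * (f (u y) * u' y) :=
        (intervalIntegral.integral_eq_sub_of_hasDerivAt (fun y _ => hasDerivAt_sq y)
          (continuous_power.intervalIntegrable s t)).symm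
    _ = 2 * ∫ y in s..t, (f ∘ u) y * u' y := intervalIntegral.integral_const_mul _ _
    _ = 2 * ∫ x in u s..u t, f x := by
        rw [intervalIntegral.integral_comp_mul_deriv'' hu.continuous.continuousOn
          (fun y _ => (hu.hasDerivAt y).hasDerivWithinAt) hu.continuous_velocity.continuousOn
          continuousOn_force]

lemma force_eq_zero_of_tendsto (hu : IsTrajectory f u u') (hf : ContinuousAt f c)
    (hc : Tendsto u atTop (𝓝 c)) : f c = 0 :=
  eq_zero_of_tendsto_of_tendsto_deriv_deriv hu.hasDerivAt hu.hasDerivAt_velocity hc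
    (hf.tendsto.comp hc)

lemma tendsto_velocity_of_tendsto (hu : IsTrajectory f u u') (hf : ContinuousAt f c)
    (hc : Tendsto u atTop (𝓝 c)) : Tendsto u' atTop (𝓝 0) :=
  tendsto_deriv_zero_of_tendsto hu.hasDerivAt hu.hasDerivAt_velocity hc
    (hu.force_eq_zero_of_tendsto hf hc ▸ hf.tendsto.comp hc)

lemma eq_const_of_tendsto_of_eq (hu : IsTrajectory f u u') (hf : DifferentiableAt ℝ f c)
    (hc : Tendsto u atTop (𝓝 c)) (h₀ : u y₀ = c) : u = fun _ => c := by
  have kinetic_tendsto : Tendsto (fun t => u' t ^ 2 - u' y₀ ^ 2) atTop (𝓝 (0 - u' y₀ ^ 2)) := by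
    simpa using ((hu.tendsto_velocity_of_tendsto hf.continuousAt hc).pow 2).sub_const (u' y₀ ^ 2)
  have work_tendsto : Tendsto (fun t => u' t ^ 2 - u' y₀ ^ 2) atTop (𝓝 0) := by
    simp only [hu.sq_velocity_sub_sq_velocity, h₀]
    simpa using ((tendsto_integral_of_continuousAt hf.continuousAt).comp hc).const_mul 2
  have sq_velocity_eq_zero : 0 - u' y₀ ^ 2 = 0 := tendsto_nhds_unique kinetic_tendsto work_tendsto
  exact hu.eq_const_of_rest hf (hu.force_eq_zero_of_tendsto hf.continuousAt hc) h₀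
    (by simpa using sq_velocity_eq_zero)

lemma eq_const_of_tendsto_atBot_of_eq (hu : IsTrajectory f u u') (hf : DifferentiableAt ℝ f c)
    (hc : Tendsto u atBot (𝓝 c)) (h₀ : u y₀ = c) : u = fun _ => c := by
  have tendsto_reflected : Tendsto (fun y => u (0 - y)) atTop (𝓝 c) := by
    simpa only [zero_sub, Function.comp_def] using hc.comp tendsto_neg_atTop_atBot
  have reflected_eq := (hu.comp_const_sub 0).eq_const_of_tendsto_of_eq (y₀ := -y₀) hf
    tendsto_reflected (by simpa using h₀)
  ext y
  simpa using congrFun reflected_eq (-y)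

end IsTrajectory

end Trajectories

section DoubleWell

open Filter Set Topology

/-- A double-well potential on `[-1, 1]` whose wells `±1` are balanced at height `0`. The wells may
be degenerate; differentiability of `deriv F` at `±1` is two-sided, so it also controls `deriv F`
just outside `[-1, 1]`. -/
structure IsDoubleWell (F : ℝ → ℝ) : Prop where
  contDiffOn : ContDiffOn ℝ 2 F (Icc (-1) 1)
  left_eq_zero : F (-1) = 0
  right_eq_zero : F 1 = 0
  deriv_left_eq_zero : deriv F (-1) = 0
  deriv_right_eq_zero : deriv F 1 = 0
  differentiableAt_deriv_left : DifferentiableAt ℝ (deriv F) (-1)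
  differentiableAt_deriv_right : DifferentiableAt ℝ (deriv F) 1
  deriv_pos : ∀ t ∈ Ioo (-1 : ℝ) 0, 0 < deriv F t
  deriv_neg : ∀ t ∈ Ioo (0 : ℝ) 1, deriv F t < 0

namespace IsDoubleWell

variable {F u u' : ℝ → ℝ} {t c : ℝ}

lemma hasDerivAt (hF : IsDoubleWell F) (ht : t ∈ Ioo (-1) 1) : HasDerivAt F (deriv F t) t :=
  ((hF.contDiffOn.contDiffAt (Icc_mem_nhds ht.1 ht.2)).differentiableAt two_ne_zero).hasDerivAt

lemma contDiffOn_deriv (hF : IsDoubleWell F) : ContDiffOn ℝ 1 (deriv F) (Ioo (-1) 1) :=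
  (hF.contDiffOn.mono Ioo_subset_Icc_self).deriv_of_isOpen isOpen_Ioo one_add_one_eq_two.le

lemma differentiableAt_deriv (hF : IsDoubleWell F) (ht : t ∈ Icc (-1) 1) :
    DifferentiableAt ℝ (deriv F) t := by
  rcases eq_endpoints_or_mem_Ioo_of_mem_Icc ht with rfl | rfl | ht
  · exact hF.differentiableAt_deriv_left
  · exact hF.differentiableAt_deriv_right
  · exact (hF.contDiffOn_deriv.contDiffAt (isOpen_Ioo.mem_nhds ht)).differentiableAt one_ne_zero

lemma exists_lipschitzOnWith_deriv (hF : IsDoubleWell F) :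
    ∃ C, LipschitzOnWith C (deriv F) (Ioo (-1) 1) := by
  obtain ⟨C, hC⟩ := (hF.contDiffOn.derivWithin (uniqueDiffOn_Icc (by norm_num))
    one_add_one_eq_two.le).exists_lipschitzOnWith one_ne_zero (convex_Icc _ _) isCompact_Icc
  refine ⟨C, fun x hx y hy => ?_⟩
  rw [← derivWithin_of_mem_nhds (Icc_mem_nhds hx.1 hx.2),
    ← derivWithin_of_mem_nhds (Icc_mem_nhds hy.1 hy.2)]
  exact hC (Ioo_subset_Icc_self hx) (Ioo_subset_Icc_self hy)

lemma strictMonoOn (hF : IsDoubleWell F) : StrictMonoOn F (Icc (-1) 0) :=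
  strictMonoOn_of_deriv_pos (convex_Icc _ _)
    (hF.contDiffOn.continuousOn.mono (Icc_subset_Icc_right zero_le_one))
    (by simpa only [interior_Icc] using hF.deriv_pos)

lemma strictAntiOn (hF : IsDoubleWell F) : StrictAntiOn F (Icc 0 1) :=
  strictAntiOn_of_deriv_neg (convex_Icc _ _)
    (hF.contDiffOn.continuousOn.mono (Icc_subset_Icc_left (by norm_num)))
    (by simpa only [interior_Icc] using hF.deriv_neg)

lemma pos (hF : IsDoubleWell F) (ht : t ∈ Ioo (-1) 1) : 0 < F t := by
  rcases le_total t 0 with h | h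
  · exact hF.left_eq_zero ▸
      hF.strictMonoOn (left_mem_Icc.2 (by norm_num)) ⟨ht.1.le, h⟩ ht.1
  · exact hF.right_eq_zero ▸
      hF.strictAntiOn ⟨h, ht.2.le⟩ (right_mem_Icc.2 zero_le_one) ht.2

lemma lt_apply_zero (hF : IsDoubleWell F) (ht : t ∈ Ioo (-1) 1) (h₀ : t ≠ 0) : F t < F 0 := by
  rcases h₀.lt_or_gt with h | h
  · exact hF.strictMonoOn ⟨ht.1.le, h.le⟩ (right_mem_Icc.2 (by norm_num)) h
  · exact hF.strictAntiOn (left_mem_Icc.2 zero_le_one) ⟨h.le, ht.2.le⟩ h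

lemma eq_of_deriv_eq_zero (hF : IsDoubleWell F) (ht : t ∈ Icc (-1) 1) (h₀ : deriv F t = 0) :
    t = 0 ∨ t = -1 ∨ t = 1 := by
  rcases eq_endpoints_or_mem_Ioo_of_mem_Icc ht with h | h | ht
  · exact .inr (.inl h)
  · exact .inr (.inr h)
  · rcases lt_trichotomy t 0 with h | h | h
    · exact absurd h₀ (hF.deriv_pos t ⟨ht.1, h⟩).ne'
    · exact .inl h
    · exact absurd h₀ (hF.deriv_neg t ⟨h, ht.2⟩).ne

lemma mem_Ioo_of_abs_le_one (hF : IsDoubleWell F) (hu : IsTrajectory (deriv F) u u')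
    (hb : ∀ y, |u y| ≤ 1) (hnc : ¬ ∃ c, ∀ y, u y = c) (y : ℝ) : u y ∈ Ioo (-1) 1 := by
  rcases eq_endpoints_or_mem_Ioo_of_mem_Icc (abs_le.1 (hb y)) with h | h | h
  · have velocity_eq_zero : u' y = 0 := IsLocalMin.hasDerivAt_eq_zero
      (Eventually.of_forall fun x => h ▸ (abs_le.1 (hb x)).1) (hu.hasDerivAt y)
    exact absurd ⟨_, congrFun (hu.eq_const_of_rest hF.differentiableAt_deriv_left
      hF.deriv_left_eq_zero h velocity_eq_zero)⟩ hnc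
  · have velocity_eq_zero : u' y = 0 := IsLocalMax.hasDerivAt_eq_zero
      (Eventually.of_forall fun x => h ▸ (abs_le.1 (hb x)).2) (hu.hasDerivAt y)
    exact absurd ⟨_, congrFun (hu.eq_const_of_rest hF.differentiableAt_deriv_right
      hF.deriv_right_eq_zero h velocity_eq_zero)⟩ hnc
  · exact h

lemma mem_Ioo_of_tendsto (hF : IsDoubleWell F) (hu : IsTrajectory (deriv F) u u')
    (hbot : Tendsto u atBot (𝓝 (-1))) (htop : Tendsto u atTop (𝓝 1)) (y : ℝ) :
    u y ∈ Ioo (-1) 1 := by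
  have ne_const (c : ℝ) : u ≠ fun _ => c := by
    rintro rfl
    linarith [tendsto_nhds_unique hbot tendsto_const_nhds,
      tendsto_nhds_unique htop tendsto_const_nhds]
  constructor <;> by_contra! h
  · obtain ⟨x, hx⟩ : -1 ∈ range u := mem_range_of_exists_le_of_exists_ge hu.continuous ⟨y, h⟩
      (htop.eventually_const_le (by norm_num)).exists
    exact ne_const _ (hu.eq_const_of_tendsto_atBot_of_eq hF.differentiableAt_deriv_left hbot hx)
  · obtain ⟨x, hx⟩ : 1 ∈ range u := mem_range_of_exists_le_of_exists_ge hu.continuous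
      (hbot.eventually_le_const (by norm_num)).exists ⟨y, h⟩
    exact ne_const _ (hu.eq_const_of_tendsto_of_eq hF.differentiableAt_deriv_right htop hx)

lemma sq_velocity_eq_sub (hF : IsDoubleWell F) (hu : IsTrajectory (deriv F) u u')
    (hI : ∀ y, u y ∈ Ioo (-1) 1) (hc : Tendsto u atTop (𝓝 c)) (y : ℝ) :
    u' y ^ 2 = 2 * (F (u y) - F c) := by
  have c_mem : c ∈ Icc (-1) 1 :=
    isClosed_Icc.mem_of_tendsto hc (Eventually.of_forall fun y => Ioo_subset_Icc_self (hI y))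
  have hasDerivAt_energy (x : ℝ) : HasDerivAt (fun x => u' x ^ 2 - 2 * F (u x)) 0 x :=
    (((hu.hasDerivAt_velocity x).fun_pow 2).fun_sub
      (((hF.hasDerivAt (hI x)).comp x (hu.hasDerivAt x)).const_mul 2)).congr_deriv (by ring)
  have energy_const (x : ℝ) : u' x ^ 2 - 2 * F (u x) = u' y ^ 2 - 2 * F (u y) :=
    is_const_of_deriv_eq_zero (fun x => (hasDerivAt_energy x).differentiableAt)
      (fun x => (hasDerivAt_energy x).deriv) x y
  have potential_tendsto : Tendsto (fun x => F (u x)) atTop (𝓝 (F c)) :=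
    (hF.contDiffOn.continuousOn c c_mem).tendsto.comp (tendsto_nhdsWithin_iff.2
      ⟨hc, Eventually.of_forall fun x => Ioo_subset_Icc_self (hI x)⟩)
  have energy_tendsto : Tendsto (fun x => u' x ^ 2 - 2 * F (u x)) atTop (𝓝 (0 ^ 2 - 2 * F c)) :=
    ((hu.tendsto_velocity_of_tendsto (hF.differentiableAt_deriv c_mem).continuousAt hc).pow 2).sub
      (potential_tendsto.const_mul 2)
  simp only [energy_const] at energy_tendsto
  linarith [tendsto_nhds_unique energy_tendsto tendsto_const_nhds]

lemma limit_eq_neg_one_or_one (hF : IsDoubleWell F) (hu : IsTrajectory (deriv F) u u')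
    (hI : ∀ y, u y ∈ Ioo (-1) 1) (hnc : ¬ ∃ c, ∀ y, u y = c) (hc : Tendsto u atTop (𝓝 c)) :
    c = -1 ∨ c = 1 := by
  have c_mem : c ∈ Icc (-1) 1 :=
    isClosed_Icc.mem_of_tendsto hc (Eventually.of_forall fun y => Ioo_subset_Icc_self (hI y))
  refine (hF.eq_of_deriv_eq_zero c_mem (hu.force_eq_zero_of_tendsto
    (hF.differentiableAt_deriv c_mem).continuousAt hc)).resolve_left ?_
  rintro rfl
  refine hnc ⟨0, fun y => by_contra fun hy => ?_⟩
  linarith [sq_nonneg (u' y), hF.sq_velocity_eq_sub hu hI hc y, hF.lt_apply_zero (hI y) hy]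

lemma sq_velocity_eq (hF : IsDoubleWell F) (hu : IsTrajectory (deriv F) u u')
    (hI : ∀ y, u y ∈ Ioo (-1) 1) (hnc : ¬ ∃ c, ∀ y, u y = c) (hc : Tendsto u atTop (𝓝 c))
    (y : ℝ) : u' y ^ 2 = 2 * F (u y) := by
  rw [hF.sq_velocity_eq_sub hu hI hc]
  rcases hF.limit_eq_neg_one_or_one hu hI hnc hc with rfl | rfl
  · rw [hF.left_eq_zero, sub_zero]
  · rw [hF.right_eq_zero, sub_zero]

lemma velocity_ne_zero (hF : IsDoubleWell F) (hu : IsTrajectory (deriv F) u u')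
    (hI : ∀ y, u y ∈ Ioo (-1) 1) (hnc : ¬ ∃ c, ∀ y, u y = c)
    (hst : IsStablePotential fun y => deriv (deriv F) (u y)) (y : ℝ) : u' y ≠ 0 := by
  intro hy
  by_cases hz : ∃ z ∈ Ioi y, u' z = 0
  · obtain ⟨z, hyz, hz⟩ := hz
    have continuous_potential : Continuous fun y => deriv (deriv F) (u y) :=
      (hF.contDiffOn_deriv.continuousOn_deriv_of_isOpen isOpen_Ioo le_rfl).comp_continuous
        hu.continuous hI
    have hasDerivAt_force (x : ℝ) :
        HasDerivAt (fun x => deriv F (u x)) (deriv (deriv F) (u x) * u' x) x :=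
      (hF.differentiableAt_deriv (Ioo_subset_Icc_self (hI x))).hasDerivAt.comp x (hu.hasDerivAt x)
    have force_eq_zero : deriv F (u y) = 0 :=
      hst.deriv_eq_zero_of_conjugate (u' := fun x => deriv F (u x)) continuous_potential
        hu.hasDerivAt_velocity hasDerivAt_force hyz hy hz
    exact hnc ⟨_, congrFun (hu.eq_const_of_rest
      (hF.differentiableAt_deriv (Ioo_subset_Icc_self (hI y))) force_eq_zero rfl hy)⟩
  · push Not at hz
    obtain ⟨c, hc⟩ := exists_tendsto_of_deriv_ne_zero hu.hasDerivAt
      (fun x => abs_le.2 (Ioo_subset_Icc_self (hI x))) hz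
    have sq_velocity := hF.sq_velocity_eq hu hI hnc hc y
    rw [hy] at sq_velocity
    linarith [hF.pos (hI y)]

lemma tendsto_neg_one_or_one (hF : IsDoubleWell F) (hu : IsTrajectory (deriv F) u u')
    (hI : ∀ y, u y ∈ Ioo (-1) 1) (hne : ∀ y, u' y ≠ 0) :
    Tendsto u atTop (𝓝 (-1)) ∨ Tendsto u atTop (𝓝 1) := by
  obtain ⟨c, hc⟩ := exists_tendsto_of_deriv_ne_zero (a := 0) hu.hasDerivAt
    (fun x => abs_le.2 (Ioo_subset_Icc_self (hI x))) fun y _ => hne y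
  have nonconst : ¬ ∃ c, ∀ y, u y = c := fun ⟨c, h⟩ => hne 0 <|
    (hu.hasDerivAt 0).unique (funext h ▸ hasDerivAt_const 0 c)
  rcases hF.limit_eq_neg_one_or_one hu hI nonconst hc with rfl | rfl
  · exact .inl hc
  · exact .inr hc

lemma exists_eq_zero_of_velocity_pos (hF : IsDoubleWell F) (hu : IsTrajectory (deriv F) u u')
    (hI : ∀ y, u y ∈ Ioo (-1) 1) (hpos : ∀ y, 0 < u' y) : ∃ K, u K = 0 := by
  have mono : Monotone u := (strictMono_of_hasDerivAt_pos hu.hasDerivAt hpos).monotone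
  have tendsto_top : Tendsto u atTop (𝓝 1) :=
    (hF.tendsto_neg_one_or_one hu hI fun y => (hpos y).ne').resolve_left fun h =>
      (hI 0).1.not_ge (mono.ge_of_tendsto h 0)
  have tendsto_reflected : Tendsto (fun y => u (0 - y)) atTop (𝓝 (-1)) :=
    (hF.tendsto_neg_one_or_one (hu.comp_const_sub 0) (fun y => hI _)
      fun y => neg_ne_zero.2 (hpos _).ne').resolve_right fun h =>
      (hI 0).2.not_ge (by
        simpa using (mono.comp_antitone fun x y hxy => sub_le_sub_left hxy 0).le_of_tendsto h 0)
  obtain ⟨a, ha⟩ := (tendsto_reflected.eventually_le_const neg_one_lt_zero).exists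
  exact mem_range_of_exists_le_of_exists_ge hu.continuous ⟨_, ha⟩
    (tendsto_top.eventually_const_le zero_lt_one).exists

lemma exists_eq_zero_of_velocity_ne_zero (hF : IsDoubleWell F) (hu : IsTrajectory (deriv F) u u')
    (hI : ∀ y, u y ∈ Ioo (-1) 1) (hne : ∀ y, u' y ≠ 0) : ∃ K, u K = 0 := by
  rcases hu.velocity_neg_or_pos hne with neg | pos
  · obtain ⟨K, hK⟩ := hF.exists_eq_zero_of_velocity_pos (hu.comp_const_sub 0) (fun y => hI _)
      fun y => neg_pos.2 (neg _)
    exact ⟨_, hK⟩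
  · exact hF.exists_eq_zero_of_velocity_pos hu hI pos

end IsDoubleWell

end DoubleWell

theorem stmt_13_general {F g v : ℝ → ℝ} (hF : IsDoubleWell F) (hg : ContDiff ℝ 2 g)
    (hgode : ∀ s, deriv (deriv g) s = deriv F (g s))
    (hgtop : Filter.Tendsto g Filter.atTop (nhds 1))
    (hgbot : Filter.Tendsto g Filter.atBot (nhds (-1))) (hg0 : g 0 = 0)
    (hv : ContDiff ℝ 2 v) (hvode : ∀ y, deriv (deriv v) y = deriv F (v y))
    (hvb : ∀ y, |v y| ≤ 1) (hstable : IsStablePotential fun y => deriv (deriv F) (v y))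
    (hnonconst : ¬ ∃ c, ∀ y, v y = c) :
    (∃ K, (∀ y, v y = g (y - K)) ∨ (∀ y, v y = g (K - y))) ∧ (StrictMono v ∨ StrictAnti v) := by
  have hgT : IsTrajectory (deriv F) g (deriv g) := .of_contDiff hg hgode
  have hvT : IsTrajectory (deriv F) v (deriv v) := .of_contDiff hv hvode
  have hgI := hF.mem_Ioo_of_tendsto hgT hgbot hgtop
  have hvI := hF.mem_Ioo_of_abs_le_one hvT hvb hnonconst
  have hv' := hF.velocity_ne_zero hvT hvI hnonconst hstable
  obtain ⟨C, hC⟩ := hF.exists_lipschitzOnWith_deriv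
  obtain ⟨K, hK⟩ := hF.exists_eq_zero_of_velocity_ne_zero hvT hvI hv'
  have sq_velocity : deriv v K ^ 2 = deriv g 0 ^ 2 := by
    rcases hF.tendsto_neg_one_or_one hvT hvI hv' with hlim | hlim <;>
      simp only [hF.sq_velocity_eq_sub hvT hvI hlim, hF.sq_velocity_eq_sub hgT hgI hgtop, hK, hg0,
        hF.left_eq_zero, hF.right_eq_zero]
  exact ⟨⟨K, IsTrajectory.eq_translate_or_eq_reflection_of_sq_velocity_eq hC hvT hgT hvI hgI
    (hK.trans hg0.symm) sq_velocity⟩, hvT.strictMono_or_strictAnti hv'⟩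

/-- A nonconstant bounded stable 1-D solution is a translate of `±g`; it is strictly monotone. -/
theorem stmt_13
    (F g v : ℝ → ℝ)
    (hF : ContDiffOn ℝ 2 F (Set.Icc (-1) 1))
    (hF1 : F 1 = 0) (hFm1 : F (-1) = 0)
    (hF'1 : deriv F 1 = 0) (hF'm1 : deriv F (-1) = 0)
    (hF''1 : 0 < deriv (deriv F) 1) (hF''m1 : 0 < deriv (deriv F) (-1))
    (hFpos : ∀ t ∈ Set.Ioo (-1 : ℝ) 0, 0 < deriv F t)
    (hFneg : ∀ t ∈ Set.Ioo (0 : ℝ) 1, deriv F t < 0)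
    (hg : ContDiff ℝ 2 g)
    (hgode : ∀ s : ℝ, deriv (deriv g) s = deriv F (g s))
    (hgtop : Filter.Tendsto g Filter.atTop (nhds 1))
    (hgbot : Filter.Tendsto g Filter.atBot (nhds (-1)))
    (hg0 : g 0 = 0)
    (hv : ContDiff ℝ 2 v)
    (hvode : ∀ y : ℝ, deriv (deriv v) y = deriv F (v y))
    (hvb : ∀ y : ℝ, |v y| ≤ 1)
    (hstable : ∀ φ : ℝ → ℝ, ContDiff ℝ (⊤ : ℕ∞) φ → HasCompactSupport φ →
      0 ≤ ∫ y : ℝ, ((deriv φ y) ^ 2 + deriv (deriv F) (v y) * (φ y) ^ 2))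
    (hnonconst : ¬ ∃ c : ℝ, ∀ y : ℝ, v y = c) :
    (∃ K : ℝ, (∀ y : ℝ, v y = g (y - K)) ∨ (∀ y : ℝ, v y = g (K - y)))
      ∧ (StrictMono v ∨ StrictAnti v) :=
  stmt_13_general
    ⟨hF, hFm1, hF1, hF'm1, hF'1, differentiableAt_of_deriv_ne_zero hF''m1.ne',
      differentiableAt_of_deriv_ne_zero hF''1.ne', hFpos, hFneg⟩
    hg hgode hgtop hgbot hg0 hv hvode hvb hstable hnonconst
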